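/- If A and B are c.e. subsets of ℕ with B ⊆ A, then (E_A)⁺ is computably reducible to (E_B)⁺. -/

import Mathlib

/-- The `e`-th partial computable function. -/
def phi (e : ℕ) : ℕ →. ℕ :=
  Nat.Partrec.Code.eval (Denumerable.ofNat Nat.Partrec.Code e)

/-- `W_e`, the `e`-th c.e. set: the domain of `φ_e`. -/
def WSet (e : ℕ) : Set ℕ := (phi e).Dom

/-- The `E`-equivalence class of `k`. -/
def classOf (E : ℕ → ℕ → Prop) (k : ℕ) : Set ℕ := {x | E k x}

/-- Computable reducibility of binary relations on ℕ. -/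
def Reduces (E F : ℕ → ℕ → Prop) : Prop :=
  ∃ f : ℕ → ℕ, Computable f ∧ ∀ m n, E m n ↔ F (f m) (f n)

/-- The computable FS-jump of `E`: `e E⁺ e'` iff the set of `E`-classes of elements
of `ran φ_e` equals the set of `E`-classes of elements of `ran φ_{e'}`. -/
def FSJump (E : ℕ → ℕ → Prop) : ℕ → ℕ → Prop :=
  fun e e' => classOf E '' (phi e).ran = classOf E '' (phi e').ran

/-- A set is c.e. if it is `W_e` for some `e`. -/
def CeSet (S : Set ℕ) : Prop := ∃ e : ℕ, S = WSet e

/-- `E_A`: `m E_A n` iff `m = n` or both `m, n ∈ A`. -/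
def EA (A : Set ℕ) : ℕ → ℕ → Prop :=
  fun m n => m = n ∨ (m ∈ A ∧ n ∈ A)

/-!
The `E`-saturation of a c.e. set is c.e. uniformly in an index whenever `E` is c.e., and the
set of `E`-classes met by a set amounts to its `E`-saturation. A relation `F` finer than `E` does
not enlarge an `E`-saturated set, so such a set is also recovered from the `F`-classes it meets.
Hence passing from an index of `S` to an index of its `E`-saturation reduces `E⁺` to `F⁺`.
-/

section Saturation

variable {E F : ℕ → ℕ → Prop} {S T : Set ℕ}

/-- The `E`-saturation of `S`, i.e. the union of the `E`-classes of its elements. -/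
def saturation (E : ℕ → ℕ → Prop) (S : Set ℕ) : Set ℕ :=
  ⋃₀ (classOf E '' S)

theorem mem_saturation {y : ℕ} : y ∈ saturation E S ↔ ∃ x ∈ S, E x y := by
  simp only [saturation, Set.sUnion_image, Set.mem_iUnion, exists_prop, classOf, Set.mem_ofPred_eq]

theorem subset_saturation [Std.Refl E] : S ⊆ saturation E S :=
  fun x hx => mem_saturation.2 ⟨x, hx, refl_of E x⟩

theorem saturation_saturation_of_le [IsTrans ℕ E] [Std.Refl F] (hFE : F ≤ E) :
    saturation F (saturation E S) = saturation E S := by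
  refine Set.Subset.antisymm (fun z hz => ?_) subset_saturation
  obtain ⟨y, hy, hyz⟩ := mem_saturation.1 hz
  obtain ⟨x, hx, hxy⟩ := mem_saturation.1 hy
  exact mem_saturation.2 ⟨x, hx, trans_of E hxy (hFE y z hyz)⟩

theorem classOf_eq_of_rel [IsEquiv ℕ E] {x y : ℕ} (hxy : E x y) :
    classOf E x = classOf E y :=
  Set.ext fun _ => ⟨trans_of E (symm_of E hxy), trans_of E hxy⟩

theorem image_classOf_saturation [IsEquiv ℕ E] :
    classOf E '' saturation E S = classOf E '' S := by
  refine Set.Subset.antisymm ?_ (Set.image_mono subset_saturation)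
  rintro _ ⟨y, hy, rfl⟩
  obtain ⟨x, hx, hxy⟩ := mem_saturation.1 hy
  exact ⟨x, hx, classOf_eq_of_rel hxy⟩

theorem image_classOf_saturation_eq_iff [IsTrans ℕ E] [Std.Refl F] (hFE : F ≤ E) :
    classOf F '' saturation E S = classOf F '' saturation E T ↔
      saturation E S = saturation E T := by
  refine ⟨fun h => ?_, congrArg _⟩
  calc
    saturation E S = saturation F (saturation E S) := (saturation_saturation_of_le hFE).symm
    _ = saturation F (saturation E T) := congrArg Set.sUnion h
    _ = saturation E T := saturation_saturation_of_le hFE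

theorem image_classOf_eq_iff_saturation_eq [IsEquiv ℕ E] :
    classOf E '' S = classOf E '' T ↔ saturation E S = saturation E T := by
  rw [← image_classOf_saturation (E := E) (S := S), ← image_classOf_saturation (E := E) (S := T),
    image_classOf_saturation_eq_iff le_rfl]

end Saturation

section Computability

variable {α : Type*} [Primcodable α] {p q : α → Prop}

theorem rePred_comp {β : Type*} [Primcodable β] {f : β → α} (hp : REPred p) (hf : Computable f) :
    REPred fun b => p (f b) :=
  Partrec.comp hp hf

theorem rePred_and (hp : REPred p) (hq : REPred q) : REPred fun a => p a ∧ q a :=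
  (Partrec.bind hp (Partrec.comp hq Computable.fst).to₂).dom_re.of_eq fun a => by
    simp [Part.assert]

theorem rePred_or (hp : REPred p) (hq : REPred q) : REPred fun a => p a ∨ q a := by
  obtain ⟨k, hk, hk_spec⟩ := Partrec.merge' hp hq
  exact hk.dom_re.of_eq fun a => by simpa [Part.assert] using (hk_spec a).2

theorem partrec₂_phi : Partrec₂ phi :=
  Nat.Partrec.Code.eval_part.comp₂ ((Computable.ofNat _).comp Computable.fst).to₂
    Computable.snd.to₂

theorem exists_computable_phi_eq {g : ℕ → ℕ →. ℕ} (hg : Partrec₂ g) :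
    ∃ f : ℕ → ℕ, Computable f ∧ ∀ e, phi (f e) = g e := by
  obtain ⟨c, hc⟩ := Nat.Partrec.Code.exists_code.1 (Partrec₂.unpaired'.2 hg)
  obtain ⟨s, hs, hs_eval⟩ := Nat.Partrec.Code.smn
  refine ⟨fun e => Encodable.encode (s c e),
    Computable.encode.comp (hs.comp (Computable.const c) Computable.id), fun e => ?_⟩
  funext n
  simp [phi, hs_eval, hc]

/-- A partial function enumerating the `E`-saturation of `ran φ_e`: on input `⟨k, y⟩` it outputs
`y` once `φ_e k` has converged and is seen to be `E`-related to `y`. -/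
def saturationEnum (E : ℕ → ℕ → Prop) (e : ℕ) : ℕ →. ℕ := fun n =>
  (phi e n.unpair.1).bind fun x => Part.assert (E x n.unpair.2) fun _ => Part.some n.unpair.2

variable {E : ℕ → ℕ → Prop}

theorem mem_saturationEnum {e n y : ℕ} :
    y ∈ saturationEnum E e n ↔ ∃ x ∈ phi e n.unpair.1, E x n.unpair.2 ∧ y = n.unpair.2 := by
  simp only [saturationEnum, Part.mem_bind_iff, Part.mem_assert_iff, Part.mem_some_iff, exists_prop]

theorem ran_saturationEnum (e : ℕ) : (saturationEnum E e).ran = saturation E (phi e).ran := by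
  ext y
  rw [mem_saturation]
  constructor
  · rintro ⟨n, hn⟩
    obtain ⟨x, hx, hxy, rfl⟩ := mem_saturationEnum.1 hn
    exact ⟨x, ⟨_, hx⟩, hxy⟩
  · rintro ⟨x, ⟨k, hk⟩, hxy⟩
    refine ⟨Nat.pair k y, mem_saturationEnum.2 ⟨x, ?_⟩⟩
    simpa only [Nat.unpair_pair, and_true] using And.intro hk hxy

theorem partrec₂_saturationEnum (hE : REPred fun p : ℕ × ℕ => E p.1 p.2) :
    Partrec₂ (saturationEnum E) := by
  have hk : Computable fun p : ℕ × ℕ => p.2.unpair.1 :=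
    Computable.fst.comp (Computable.unpair.comp Computable.snd)
  have hy : Computable fun p : ℕ × ℕ => p.2.unpair.2 :=
    Computable.snd.comp (Computable.unpair.comp Computable.snd)
  have h_test : Partrec₂ fun (p : ℕ × ℕ) (x : ℕ) =>
      Part.assert (E x p.2.unpair.2) fun _ => Part.some () :=
    rePred_comp hE (Computable.snd.pair (hy.comp Computable.fst))
  have h_answer : Partrec₂ fun (p : ℕ × ℕ) (x : ℕ) =>
      Part.assert (E x p.2.unpair.2) fun _ => Part.some p.2.unpair.2 :=
    (Partrec.map h_test ((hy.comp Computable.fst).comp Computable.fst).to₂).of_eq fun _ => rfl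
  exact (partrec₂_phi.comp Computable.fst hk).bind h_answer

theorem exists_computable_ran_phi_eq_saturation (hE : REPred fun p : ℕ × ℕ => E p.1 p.2) :
    ∃ f : ℕ → ℕ, Computable f ∧ ∀ e, (phi (f e)).ran = saturation E (phi e).ran := by
  obtain ⟨f, hf, hf_phi⟩ := exists_computable_phi_eq (partrec₂_saturationEnum hE)
  exact ⟨f, hf, fun e => by rw [hf_phi, ran_saturationEnum]⟩

end Computability

theorem jump_EA_le_jump_EB_general {E F : ℕ → ℕ → Prop} [IsEquiv ℕ E] [Std.Refl F]
    (hE : REPred fun p : ℕ × ℕ => E p.1 p.2) (hFE : F ≤ E) :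
    Reduces (FSJump E) (FSJump F) := by
  obtain ⟨f, hf, hran⟩ := exists_computable_ran_phi_eq_saturation hE
  refine ⟨f, hf, fun m n => ?_⟩
  rw [FSJump, FSJump, hran, hran, image_classOf_eq_iff_saturation_eq,
    image_classOf_saturation_eq_iff hFE]

section EA

variable {A B : Set ℕ}

instance isEquiv_EA (A : Set ℕ) : IsEquiv ℕ (EA A) where
  refl _ := Or.inl rfl
  symm _ _ h := h.imp Eq.symm And.symm
  trans := by
    rintro x y z (rfl | ⟨hx, hy⟩) (rfl | ⟨hy', hz⟩)
    exacts [.inl rfl, .inr ⟨hy', hz⟩, .inr ⟨hx, hy⟩, .inr ⟨hx, hz⟩]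

theorem EA_mono (hBA : B ⊆ A) : EA B ≤ EA A :=
  fun _ _ h => h.imp_right fun ⟨hx, hy⟩ => ⟨hBA hx, hBA hy⟩

theorem CeSet.rePred (hA : CeSet A) : REPred fun x => x ∈ A := by
  obtain ⟨e, rfl⟩ := hA
  exact (partrec₂_phi.comp (Computable.const e) Computable.id).dom_re

theorem CeSet.rePred_EA (hA : CeSet A) : REPred fun p : ℕ × ℕ => EA A p.1 p.2 :=
  rePred_or (PrimrecRel.decide Primrec.eq).to_comp.computablePred.to_re
    (rePred_and (rePred_comp hA.rePred Computable.fst) (rePred_comp hA.rePred Computable.snd))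

end EA

/-- If `A, B` are c.e. and `B ⊆ A`, then `(E_A)⁺ ≤ (E_B)⁺`. -/
theorem jump_EA_le_jump_EB (A B : Set ℕ) (hA : CeSet A) (hB : CeSet B)
    (hBA : B ⊆ A) :
    Reduces (FSJump (EA A)) (FSJump (EA B)) := by
  exact jump_EA_le_jump_EB_general hA.rePred_EA (EA_mono hBA)
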